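/- Let 1 ≤ d ≤ n and λ ∈ [0,1], and let D_λ : M_n(ℂ) → M_n(ℂ) be the quantum depolarizing channel D_λ(ρ) = λρ + (1−λ)(tr(ρ)/n) I_n. Set μ = λ + (1−λ)/(nd) and let H(μ) = −μ log₂ μ − (1−μ) log₂(1−μ) be the binary Shannon entropy. Then λ log₂(nd) − H(μ) ≤ C_prod^d(D_λ); in particular λ log₂(nd) − 1 ≤ C_prod^d(D_λ). -/

import Mathlib

noncomputable section

open scoped BigOperators ComplexOrder
open Matrix

/-- The von Neumann entropy (base 2) `S(ρ) = −tr(ρ log₂ ρ)`, computed via the eigenvalues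
(with the convention `0 log 0 = 0`). -/
def entropy2 {ι : Type*} [Fintype ι] [DecidableEq ι] (ρ : Matrix ι ι ℂ) : ℝ :=
  if h : ρ.IsHermitian then -∑ i, h.eigenvalues i * Real.logb 2 (h.eigenvalues i) else 0

/-- The partial trace over the first tensor factor, `(tr ⊗ id)`. -/
def ptrace1 {ι κ : Type*} [Fintype ι] (X : Matrix (ι × κ) (ι × κ) ℂ) : Matrix κ κ ℂ :=
  fun u v => ∑ a : ι, X (a, u) (a, v)

/-- The partial trace over the second tensor factor, `(id ⊗ tr)`. -/
def ptrace2 {ι κ : Type*} [Fintype κ] (X : Matrix (ι × κ) (ι × κ) ℂ) : Matrix ι ι ℂ :=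
  fun a b => ∑ j : κ, X (a, j) (b, j)

/-- `id_d ⊗ N`, applying `N` to each `d × d` block. -/
def idTensor (d : ℕ) {ι κ : Type*}
    (N : Matrix ι ι ℂ → Matrix κ κ ℂ)
    (X : Matrix (Fin d × ι) (Fin d × ι) ℂ) : Matrix (Fin d × κ) (Fin d × κ) ℂ :=
  fun pq rs => N (fun u v => X (pq.1, u) (rs.1, v)) pq.2 rs.2

/-- The product-state classical capacity with `d`-dimensional entanglement assistance,
`C_prod^d(N) = sup { S(∑ λ_i N((tr_d ⊗ id)(ρ_i))) + ∑ λ_i [S((id ⊗ tr)(ρ_i)) − S((id_d ⊗ N)(ρ_i))] }`,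
the supremum running over finite ensembles of states `ρ_i` on `ℂ^d ⊗ ℂ^n`. -/
def Cprod (d : ℕ) {ι κ : Type*} [Fintype ι] [DecidableEq ι] [Fintype κ] [DecidableEq κ]
    (N : Matrix ι ι ℂ → Matrix κ κ ℂ) : ℝ :=
  sSup { r : ℝ | ∃ (k : ℕ) (w : Fin k → ℝ) (ρ : Fin k → Matrix (Fin d × ι) (Fin d × ι) ℂ),
    (∀ i, 0 ≤ w i) ∧ (∑ i, w i = 1) ∧
    (∀ i, (ρ i).PosSemidef ∧ Matrix.trace (ρ i) = 1) ∧
    r = entropy2 (∑ i, w i • N (ptrace1 (ρ i))) +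
        ∑ i, w i * (entropy2 (ptrace2 (ρ i)) - entropy2 (idTensor d N (ρ i))) }

/-- The quantum depolarizing channel `D_λ(ρ) = λρ + (1−λ)(tr(ρ)/n) I_n`. -/
def depol (n : ℕ) (lam : ℝ) (ρ : Matrix (Fin n) (Fin n) ℂ) : Matrix (Fin n) (Fin n) ℂ :=
  (lam : ℂ) • ρ + (((1 - lam) / n : ℝ) : ℂ) • Matrix.trace ρ • (1 : Matrix (Fin n) (Fin n) ℂ)

/-- The quantum erasure channel `E_λ : M_n → M_{n+1}`,
`E_λ(ρ) = block-diag(λρ, (1−λ)tr(ρ))`. -/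
def erasure (n : ℕ) (lam : ℝ) (ρ : Matrix (Fin n) (Fin n) ℂ) :
    Matrix (Fin (n + 1)) (Fin (n + 1)) ℂ :=
  fun a b =>
    if ha : (a : ℕ) < n then
      if hb : (b : ℕ) < n then (lam : ℂ) * ρ ⟨a, ha⟩ ⟨b, hb⟩ else 0
    else if (b : ℕ) < n then 0 else ((1 - lam : ℝ) : ℂ) * Matrix.trace ρ

/-!
Shifting the second half of the maximally entangled state of `ℂ^d ⊗ ℂ^n` by each `s ∈ ℤ/n` gives
`n` states whose marginals on `ℂ^d` are all maximally mixed and whose marginals on `ℂ^n` average to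
the maximally mixed state. The depolarizing channel is unital, so this uniform ensemble gives the
value `log n + log d - S`, where `S` is the entropy of the isotropic state
`λ P + (1 - λ) I / (nd)`, with `P` a rank-one projection. With `N = nd`, its eigenvalues
are `μ`, once, and `(1 - λ) / N`, with multiplicity `N - 1`, hence
`S = H(μ) + (1 - μ) log (N - 1) ≤ H(μ) + (1 - λ) log N`.
The supremum defining the capacity is taken in `ℝ`, so one also has to bound it above: every
ensemble has value at most `log n + log d`, because entropies of density matrices lie between `0`
and the logarithm of the dimension.
-/

open scoped Kronecker
open Real (negMulLog binEntropy)

lemma cfc_smul_add_smul_one_sub {A : Type*} [TopologicalSpace A] [Ring A] [StarRing A]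
    [Algebra ℝ A] [ContinuousFunctionalCalculus ℝ A IsSelfAdjoint] [IsTopologicalRing A] [T2Space A]
    {p : A} (hp : IsStarProjection p) (f : ℝ → ℝ) (a b : ℝ) :
    cfc f (a • p + b • (1 - p)) = f a • p + f b • (1 - p) := by
  have hsa := hp.isSelfAdjoint
  have hspec : spectrum ℝ p ⊆ {0, 1} :=
    (isStarProjection_iff_spectrum_subset_and_isSelfAdjoint.1 hp).1
  have affine (a b : ℝ) : cfc (fun x => a * x + b * (1 - x)) p = a • p + b • (1 - p) := by
    rw [cfc_add .., cfc_const_mul .., cfc_const_mul .., cfc_sub .., cfc_id' ℝ p, cfc_const_one ℝ p]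
  have continuousOn_image (g : ℝ → ℝ) : ContinuousOn f (g '' spectrum ℝ p) :=
    (((Set.toFinite _).subset hspec).image g).continuousOn f
  rw [← affine a b, ← affine (f a) (f b), ← cfc_comp' f _ p (continuousOn_image _) (by fun_prop)]
  refine cfc_congr fun x hx => ?_
  rcases hspec hx with rfl | rfl <;> simp

lemma binEntropy_div_log_two (p : ℝ) :
    binEntropy p / Real.log 2 = -p * Real.logb 2 p - (1 - p) * Real.logb 2 (1 - p) := by
  rw [Real.binEntropy_eq_negMulLog_add_negMulLog_one_sub]
  simp only [negMulLog, Real.logb]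
  ring

section Entropy

variable {ι : Type*} [Fintype ι] [DecidableEq ι] {A P : Matrix ι ι ℂ}

lemma trace_cfc_eq_sum (hA : A.IsHermitian) (f : ℝ → ℝ) :
    (cfc f A).trace = ∑ i, (f (hA.eigenvalues i) : ℂ) := by
  rw [hA.cfc_eq, Matrix.IsHermitian.cfc, Unitary.conjStarAlgAut_apply, Matrix.trace_mul_cycle]
  simp [Matrix.trace]

lemma entropy2_eq_sum_negMulLog (hA : A.IsHermitian) :
    entropy2 A = (∑ i, negMulLog (hA.eigenvalues i)) / Real.log 2 := by
  rw [entropy2, dif_pos hA, ← Finset.sum_neg_distrib, Finset.sum_div]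
  exact Finset.sum_congr rfl fun i _ => by rw [negMulLog, Real.logb]; ring

lemma entropy2_eq_trace_cfc (hA : A.IsHermitian) :
    entropy2 A = (cfc negMulLog A).trace.re / Real.log 2 := by
  rw [entropy2_eq_sum_negMulLog hA, trace_cfc_eq_sum hA, Complex.re_sum]
  simp only [Complex.ofReal_re]

lemma entropy2_smul_add_smul_one_sub (hP : IsStarProjection P) (a b : ℝ) :
    entropy2 (a • P + b • (1 - P)) =
      (P.trace.re * negMulLog a + (Fintype.card ι - P.trace.re) * negMulLog b) / Real.log 2 := by
  have hA : (a • P + b • (1 - P)).IsHermitian :=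
    (((IsSelfAdjoint.all a).smul hP.isSelfAdjoint).add
      ((IsSelfAdjoint.all b).smul hP.one_sub.isSelfAdjoint)).isHermitian
  rw [entropy2_eq_trace_cfc hA, cfc_smul_add_smul_one_sub hP]
  simp [Matrix.trace_add, Matrix.trace_smul, Matrix.trace_sub, mul_comm]

end Entropy

section DensityMatrix

variable {ι κ : Type*} [Fintype ι] [Fintype κ]

/-- Density matrices, the states of the quantum system with basis `ι`. The two conditions are
those imposed on the members of an ensemble in `Cprod`. -/
def IsDensity (ρ : Matrix ι ι ℂ) : Prop :=
  ρ.PosSemidef ∧ ρ.trace = 1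

lemma nonempty_of_trace_eq_one {A : Matrix ι ι ℂ} (hA : A.trace = 1) : Nonempty ι := by
  by_contra h
  rw [not_nonempty_iff] at h
  simp [Matrix.trace] at hA

lemma convex_setOf_isDensity : Convex ℝ {ρ : Matrix ι ι ℂ | IsDensity ρ} := by
  rintro ρ hρ τ hτ a b ha hb hab
  refine ⟨(hρ.1.smul ha).add (hτ.1.smul hb), ?_⟩
  rw [Matrix.trace_add, Matrix.trace_smul, Matrix.trace_smul, hρ.2, hτ.2, ← add_smul, hab, one_smul]

lemma trace_ptrace1 (X : Matrix (ι × κ) (ι × κ) ℂ) : (ptrace1 X).trace = X.trace := by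
  simp only [Matrix.trace, Matrix.diag, ptrace1, Fintype.sum_prod_type]
  exact Finset.sum_comm

lemma trace_ptrace2 (X : Matrix (ι × κ) (ι × κ) ℂ) : (ptrace2 X).trace = X.trace := by
  simp only [Matrix.trace, Matrix.diag, ptrace2, Fintype.sum_prod_type]

namespace IsDensity

lemma ptrace1 {X : Matrix (ι × κ) (ι × κ) ℂ} (hX : IsDensity X) : IsDensity (ptrace1 X) := by
  refine ⟨?_, by rw [trace_ptrace1, hX.2]⟩
  have sum_blocks : _root_.ptrace1 X = ∑ a, X.submatrix (Prod.mk a) (Prod.mk a) := by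
    ext u v
    simp [_root_.ptrace1, Matrix.sum_apply]
  rw [sum_blocks]
  exact Matrix.posSemidef_sum _ fun a _ => hX.1.submatrix _

lemma ptrace2 {X : Matrix (ι × κ) (ι × κ) ℂ} (hX : IsDensity X) : IsDensity (ptrace2 X) := by
  refine ⟨?_, by rw [trace_ptrace2, hX.2]⟩
  have sum_blocks : _root_.ptrace2 X = ∑ j, X.submatrix (·, j) (·, j) := by
    ext a b
    simp [_root_.ptrace2, Matrix.sum_apply]
  rw [sum_blocks]
  exact Matrix.posSemidef_sum _ fun j _ => hX.1.submatrix _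

lemma kronecker {ρ : Matrix ι ι ℂ} {τ : Matrix κ κ ℂ} (hρ : IsDensity ρ) (hτ : IsDensity τ) :
    IsDensity (ρ ⊗ₖ τ) :=
  ⟨hρ.1.kronecker hτ.1, by rw [Matrix.trace_kronecker, hρ.2, hτ.2, one_mul]⟩

variable [DecidableEq ι] {ρ : Matrix ι ι ℂ}

lemma sum_eigenvalues (hρ : IsDensity ρ) : ∑ i, hρ.1.isHermitian.eigenvalues i = 1 := by
  have h := hρ.1.isHermitian.trace_eq_sum_eigenvalues.symm.trans hρ.2
  exact Complex.ofReal_injective (by simpa using h)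

lemma entropy2_nonneg (hρ : IsDensity ρ) : 0 ≤ entropy2 ρ := by
  rw [entropy2_eq_sum_negMulLog hρ.1.isHermitian]
  refine div_nonneg (Finset.sum_nonneg fun i _ => ?_) (Real.log_nonneg one_le_two)
  have eigenvalue_le_one : hρ.1.isHermitian.eigenvalues i ≤ 1 :=
    hρ.sum_eigenvalues ▸
      Finset.single_le_sum (fun j _ => hρ.1.eigenvalues_nonneg j) (Finset.mem_univ i)
  exact Real.negMulLog_nonneg (hρ.1.eigenvalues_nonneg i) eigenvalue_le_one

lemma entropy2_le_logb_card (hρ : IsDensity ρ) : entropy2 ρ ≤ Real.logb 2 (Fintype.card ι) := by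
  have := nonempty_of_trace_eq_one hρ.2
  rw [entropy2_eq_sum_negMulLog hρ.1.isHermitian, Real.logb]
  refine div_le_div_of_nonneg_right ?_ (Real.log_nonneg one_le_two)
  have jensen := Real.concaveOn_negMulLog.le_map_sum (t := Finset.univ)
    (w := fun _ : ι => (Fintype.card ι : ℝ)⁻¹) (fun _ _ => by positivity) (by simp)
    (fun i _ => hρ.1.eigenvalues_nonneg i)
  simp only [smul_eq_mul, ← Finset.mul_sum, hρ.sum_eigenvalues, mul_one] at jensen
  rw [negMulLog, Real.log_inv, neg_mul_neg] at jensen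
  exact le_of_mul_le_mul_left jensen (by positivity)

end IsDensity

/-- The maximally mixed state `I / |ι|`. -/
def maxMixed (ι : Type*) [Fintype ι] [DecidableEq ι] : Matrix ι ι ℂ :=
  (Fintype.card ι : ℝ)⁻¹ • 1

variable [DecidableEq ι] [DecidableEq κ]

lemma isDensity_maxMixed [Nonempty ι] : IsDensity (maxMixed ι) :=
  ⟨Matrix.PosSemidef.one.smul (by positivity), by simp [maxMixed]⟩

lemma maxMixed_kronecker_maxMixed : maxMixed ι ⊗ₖ maxMixed κ = maxMixed (ι × κ) := by
  simp [maxMixed, Matrix.smul_kronecker, Matrix.kronecker_smul, smul_smul, mul_comm]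

lemma entropy2_maxMixed : entropy2 (maxMixed ι) = Real.logb 2 (Fintype.card ι) := by
  obtain _ | _ := isEmpty_or_nonempty ι
  · simp [entropy2]
  have h := entropy2_smul_add_smul_one_sub (.one (Matrix ι ι ℂ)) (Fintype.card ι : ℝ)⁻¹ 0
  simpa [maxMixed, negMulLog, Real.logb] using h

lemma entropy2_isotropic {P : Matrix ι ι ℂ} (hP : IsStarProjection P) (htr : P.trace = 1)
    {lam μ : ℝ} (hμ : μ = lam + (1 - lam) / Fintype.card ι) :
    entropy2 (lam • P + (1 - lam) • maxMixed ι) =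
      (binEntropy μ + (1 - μ) * Real.log (Fintype.card ι - 1)) / Real.log 2 := by
  have := nonempty_of_trace_eq_one htr
  have card_ne : (Fintype.card ι : ℝ) ≠ 0 := by simp
  set ν := (1 - lam) / Fintype.card ι with hν
  have spectral_decomposition :
      lam • P + (1 - lam) • maxMixed ι = μ • P + ν • (1 - P) := by
    rw [maxMixed, smul_smul, ← div_eq_mul_inv, ← hν, hμ]
    module
  have one_sub_mu : 1 - μ = (Fintype.card ι - 1) * ν := by
    rw [hμ, hν]
    field_simp
    ring
  rw [spectral_decomposition, entropy2_smul_add_smul_one_sub hP, htr,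
    Real.binEntropy_eq_negMulLog_add_negMulLog_one_sub, one_sub_mu, Real.negMulLog_mul]
  simp only [Complex.one_re, negMulLog]
  ring

end DensityMatrix

section MaximallyEntangled

variable {ι κ : Type*} [DecidableEq κ]

/-- The unnormalized vector `∑ a, |a⟩ ⊗ |e a⟩`. -/
def graphVec (e : ι → κ) : ι × κ → ℂ :=
  fun p => if p.2 = e p.1 then 1 else 0

lemma star_graphVec (e : ι → κ) : star (graphVec e) = graphVec e := by
  ext p
  simp [graphVec, apply_ite]

variable [Fintype ι]

/-- The projection onto `graphVec e`, which is the maximally entangled state that pairs the basis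
vector `a` of the first factor with the basis vector `e a` of the second. -/
def maxEntangled (e : ι → κ) : Matrix (ι × κ) (ι × κ) ℂ :=
  (Fintype.card ι : ℝ)⁻¹ • Matrix.vecMulVec (graphVec e) (star (graphVec e))

lemma ptrace1_maxEntangled (e : ι → κ) :
    ptrace1 (maxEntangled e) = (Fintype.card ι : ℝ)⁻¹ • ∑ a, Matrix.single (e a) (e a) 1 := by
  ext u v
  simp only [ptrace1, maxEntangled, star_graphVec, graphVec, Matrix.smul_apply,
    Matrix.vecMulVec_apply, Matrix.sum_apply, Matrix.single_apply, ← Finset.smul_sum,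
    mul_ite, mul_one, mul_zero, ← ite_and, and_comm, @eq_comm _ (e _)]

variable [Fintype κ]

lemma graphVec_dotProduct_self (e : ι → κ) : graphVec e ⬝ᵥ graphVec e = Fintype.card ι := by
  simp [dotProduct, graphVec, Fintype.sum_prod_type]

lemma ptrace2_maxEntangled [DecidableEq ι] {e : ι → κ} (he : Function.Injective e) :
    ptrace2 (maxEntangled e) = maxMixed ι := by
  ext a b
  simp [ptrace2, maxMixed, maxEntangled, star_graphVec, graphVec, Matrix.vecMulVec_apply,
    Matrix.one_apply, he.eq_iff, eq_comm]

lemma trace_maxEntangled [Nonempty ι] (e : ι → κ) : (maxEntangled e).trace = 1 := by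
  simp [maxEntangled, Matrix.trace_vecMulVec, star_graphVec, graphVec_dotProduct_self]

lemma isDensity_maxEntangled [Nonempty ι] (e : ι → κ) : IsDensity (maxEntangled e) :=
  ⟨(Matrix.posSemidef_vecMulVec_self_star _).smul (by positivity), trace_maxEntangled e⟩

lemma isStarProjection_maxEntangled [Nonempty ι] (e : ι → κ) :
    IsStarProjection (maxEntangled e) where
  isIdempotentElem := by
    rw [IsIdempotentElem, maxEntangled, star_graphVec, smul_mul_smul,
      Matrix.vecMulVec_mul_vecMulVec, graphVec_dotProduct_self, ← Complex.ofReal_natCast,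
      Complex.coe_smul, Matrix.vecMulVec_smul, smul_smul, inv_mul_cancel_right₀ (by simp)]
  isSelfAdjoint := (isDensity_maxEntangled e).1.isHermitian

lemma sum_ptrace1_maxEntangled_add [Nonempty ι] [AddGroup κ] (e : ι → κ) :
    ∑ s, ptrace1 (maxEntangled fun a => e a + s) = 1 := by
  have sum_single_shift (a : ι) :
      ∑ s, Matrix.single (e a + s) (e a + s) (1 : ℂ) = 1 :=
    (Equiv.sum_comp (Equiv.addLeft (e a)) fun u => Matrix.single u u (1 : ℂ)).trans
      Matrix.sum_single_one
  simp only [ptrace1_maxEntangled]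
  rw [← Finset.smul_sum, Finset.sum_comm]
  simp only [sum_single_shift]
  simp [← Nat.cast_smul_eq_nsmul ℝ]

end MaximallyEntangled

section Capacity

variable {d : ℕ} {ι κ σ : Type*} [Fintype ι] [Fintype κ] [DecidableEq κ] [Fintype σ]

/-- The quantity maximised in the definition of `Cprod`, for the ensemble of states `ρ i` with
weights `w i`. -/
def ensembleInfo (N : Matrix ι ι ℂ → Matrix κ κ ℂ) (w : σ → ℝ)
    (ρ : σ → Matrix (Fin d × ι) (Fin d × ι) ℂ) : ℝ :=
  entropy2 (∑ i, w i • N (ptrace1 (ρ i))) +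
    ∑ i, w i * (entropy2 (ptrace2 (ρ i)) - entropy2 (idTensor d N (ρ i)))

variable {N : Matrix ι ι ℂ → Matrix κ κ ℂ}

lemma ensembleInfo_le (hN : ∀ ρ, IsDensity ρ → IsDensity (N ρ))
    (hNd : ∀ X, IsDensity X → IsDensity (idTensor d N X)) {w : σ → ℝ} (hw : w ∈ stdSimplex ℝ σ)
    {ρ : σ → Matrix (Fin d × ι) (Fin d × ι) ℂ} (hρ : ∀ i, IsDensity (ρ i)) :
    ensembleInfo N w ρ ≤ Real.logb 2 (Fintype.card κ) + Real.logb 2 d := by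
  have output_isDensity : IsDensity (∑ i, w i • N (ptrace1 (ρ i))) :=
    convex_setOf_isDensity.sum_mem (fun i _ => hw.1 i) hw.2 fun i _ => hN _ (hρ i).ptrace1
  have gain_le (i : σ) :
      entropy2 (ptrace2 (ρ i)) - entropy2 (idTensor d N (ρ i)) ≤ Real.logb 2 d := by
    have marginal_le := (hρ i).ptrace2.entropy2_le_logb_card
    rw [Fintype.card_fin] at marginal_le
    linarith [(hNd _ (hρ i)).entropy2_nonneg]
  refine add_le_add output_isDensity.entropy2_le_logb_card ?_
  calc ∑ i, w i * (entropy2 (ptrace2 (ρ i)) - entropy2 (idTensor d N (ρ i)))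
      ≤ ∑ i, w i * Real.logb 2 d :=
        Finset.sum_le_sum fun i _ => mul_le_mul_of_nonneg_left (gain_le i) (hw.1 i)
    _ = Real.logb 2 d := by rw [← Finset.sum_mul, hw.2, one_mul]

lemma ensembleInfo_le_Cprod [DecidableEq ι] (hN : ∀ ρ, IsDensity ρ → IsDensity (N ρ))
    (hNd : ∀ X, IsDensity X → IsDensity (idTensor d N X)) {k : ℕ} {w : Fin k → ℝ}
    (hw : w ∈ stdSimplex ℝ (Fin k)) {ρ : Fin k → Matrix (Fin d × ι) (Fin d × ι) ℂ}
    (hρ : ∀ i, IsDensity (ρ i)) : ensembleInfo N w ρ ≤ Cprod d N := by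
  refine le_csSup ⟨Real.logb 2 (Fintype.card κ) + Real.logb 2 d, ?_⟩
    ⟨k, w, ρ, hw.1, hw.2, hρ, rfl⟩
  rintro _ ⟨k, w, ρ, hw0, hw1, hρ, rfl⟩
  exact ensembleInfo_le hN hNd ⟨hw0, hw1⟩ hρ

end Capacity

section Depolarizing

variable {n d : ℕ} {lam : ℝ}

lemma depol_of_trace_eq_one {ρ : Matrix (Fin n) (Fin n) ℂ} (hρ : ρ.trace = 1) :
    depol n lam ρ = lam • ρ + (1 - lam) • maxMixed (Fin n) := by
  simp only [depol, maxMixed, hρ, one_smul, Complex.coe_smul, smul_smul, Fintype.card_fin,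
    div_eq_mul_inv]

lemma idTensor_depol (X : Matrix (Fin d × Fin n) (Fin d × Fin n) ℂ) :
    idTensor d (depol n lam) X = lam • X + (1 - lam) • (ptrace2 X ⊗ₖ maxMixed (Fin n)) := by
  ext ⟨a, j⟩ ⟨b, k⟩
  change depol n lam (X.submatrix (Prod.mk a) (Prod.mk b)) j k = _
  simp only [depol, ptrace2, maxMixed, Matrix.trace, Matrix.diag_apply, Matrix.submatrix_apply,
    Matrix.add_apply, Matrix.smul_apply, Matrix.kronecker_apply, Fintype.card_fin, smul_eq_mul,
    Complex.real_smul]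
  push_cast
  ring

lemma IsDensity.depol {ρ : Matrix (Fin n) (Fin n) ℂ} (hρ : IsDensity ρ) (hl0 : 0 ≤ lam)
    (hl1 : lam ≤ 1) : IsDensity (depol n lam ρ) := by
  have := nonempty_of_trace_eq_one hρ.2
  rw [depol_of_trace_eq_one hρ.2]
  exact convex_setOf_isDensity hρ isDensity_maxMixed hl0 (sub_nonneg.2 hl1) (add_sub_cancel _ _)

lemma IsDensity.idTensor_depol {X : Matrix (Fin d × Fin n) (Fin d × Fin n) ℂ} (hX : IsDensity X)
    (hl0 : 0 ≤ lam) (hl1 : lam ≤ 1) : IsDensity (idTensor d (_root_.depol n lam) X) := by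
  have := nonempty_of_trace_eq_one hX.ptrace1.2
  rw [_root_.idTensor_depol]
  exact convex_setOf_isDensity hX (hX.ptrace2.kronecker isDensity_maxMixed) hl0
    (sub_nonneg.2 hl1) (add_sub_cancel _ _)

lemma sum_smul_depol_ptrace1_maxEntangled_add [NeZero n] [NeZero d] (e : Fin d → Fin n) :
    ∑ s, (n : ℝ)⁻¹ • depol n lam (ptrace1 (maxEntangled fun a => e a + s)) = maxMixed (Fin n) := by
  simp only [depol_of_trace_eq_one (isDensity_maxEntangled _).ptrace1.2]
  rw [← Finset.smul_sum, Finset.sum_add_distrib, ← Finset.smul_sum,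
    sum_ptrace1_maxEntangled_add, Finset.sum_const, Finset.card_univ, Fintype.card_fin, maxMixed,
    Fintype.card_fin, ← Nat.cast_smul_eq_nsmul ℝ, smul_comm (n : ℝ),
    smul_inv_smul₀ (NeZero.ne (n : ℝ)), ← add_smul, add_sub_cancel, one_smul]

lemma entropy2_idTensor_depol_maxEntangled [NeZero d] {e : Fin d → Fin n}
    (he : Function.Injective e) {μ : ℝ} (hμ : μ = lam + (1 - lam) / ((n : ℝ) * d)) :
    entropy2 (idTensor d (depol n lam) (maxEntangled e)) =
      (binEntropy μ + (1 - μ) * Real.log ((n : ℝ) * d - 1)) / Real.log 2 := by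
  have card_eq : (Fintype.card (Fin d × Fin n) : ℝ) = n * d := by simp [mul_comm]
  rw [idTensor_depol, ptrace2_maxEntangled he, maxMixed_kronecker_maxMixed,
    entropy2_isotropic (isStarProjection_maxEntangled e) (trace_maxEntangled e)
      (μ := μ) (by rw [hμ, card_eq]), card_eq]

lemma ensembleInfo_depol_maxEntangled [NeZero n] [NeZero d] {e : Fin d → Fin n}
    (he : Function.Injective e) {μ : ℝ} (hμ : μ = lam + (1 - lam) / ((n : ℝ) * d)) :
    ensembleInfo (depol n lam) (fun _ => (n : ℝ)⁻¹) (fun s => maxEntangled fun a => e a + s) =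
      Real.logb 2 ((n : ℝ) * d) -
        (binEntropy μ + (1 - μ) * Real.log ((n : ℝ) * d - 1)) / Real.log 2 := by
  have shift_injective (s : Fin n) : Function.Injective fun a => e a + s :=
    (add_left_injective s).comp he
  simp only [ensembleInfo, sum_smul_depol_ptrace1_maxEntangled_add,
    ptrace2_maxEntangled (shift_injective _),
    entropy2_idTensor_depol_maxEntangled (shift_injective _) hμ, entropy2_maxMixed,
    Fintype.card_fin]
  rw [Real.logb_mul (NeZero.ne _) (NeZero.ne _)]
  simp [add_sub_assoc, mul_inv_cancel_left₀ (NeZero.ne (n : ℝ))]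

theorem logb_sub_isotropic_entropy_le_Cprod_depol (hd : 1 ≤ d) (hdn : d ≤ n) (hl0 : 0 ≤ lam)
    (hl1 : lam ≤ 1) {μ : ℝ} (hμ : μ = lam + (1 - lam) / ((n : ℝ) * d)) :
    Real.logb 2 ((n : ℝ) * d) -
        (binEntropy μ + (1 - μ) * Real.log ((n : ℝ) * d - 1)) / Real.log 2 ≤
      Cprod d (depol n lam) := by
  have : NeZero d := ⟨by lia⟩
  have : NeZero n := ⟨by lia⟩
  rw [← ensembleInfo_depol_maxEntangled (Fin.castLE_injective hdn) hμ]
  exact ensembleInfo_le_Cprod (fun _ hρ => hρ.depol hl0 hl1)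
    (fun _ hX => hX.idTensor_depol hl0 hl1)
    ⟨fun _ => by positivity, by simp⟩ fun s => isDensity_maxEntangled _

lemma one_sub_mul_log_sub_one_le {N : ℕ} (hN : 1 ≤ N) (hl1 : lam ≤ 1) {μ : ℝ}
    (hμ : μ = lam + (1 - lam) / N) :
    (1 - μ) * Real.log ((N : ℝ) - 1) ≤ (1 - lam) * Real.log N := by
  have one_sub_mu_le : 1 - μ ≤ 1 - lam := by
    have : 0 ≤ (1 - lam) / N := div_nonneg (sub_nonneg.2 hl1) N.cast_nonneg
    linarith
  obtain ⟨m, rfl⟩ := Nat.exists_eq_add_of_le' hN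
  rw [Nat.cast_succ, add_sub_cancel_right]
  refine mul_le_mul one_sub_mu_le ?_ (Real.log_natCast_nonneg m) (sub_nonneg.2 hl1)
  rcases m.eq_zero_or_pos with rfl | hm
  · simp
  · gcongr
    simp

theorem mul_logb_sub_binEntropy_le_Cprod_depol (hd : 1 ≤ d) (hdn : d ≤ n) (hl0 : 0 ≤ lam)
    (hl1 : lam ≤ 1) {μ : ℝ} (hμ : μ = lam + (1 - lam) / ((n : ℝ) * d)) :
    lam * Real.logb 2 ((n : ℝ) * d) - binEntropy μ / Real.log 2 ≤ Cprod d (depol n lam) := by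
  refine le_trans ?_ (logb_sub_isotropic_entropy_le_Cprod_depol hd hdn hl0 hl1 hμ)
  have log_le : (1 - μ) * Real.log ((n : ℝ) * d - 1) ≤ (1 - lam) * Real.log ((n : ℝ) * d) := by
    have nd_pos : 1 ≤ n * d := Nat.mul_pos (hd.trans hdn) hd
    exact_mod_cast one_sub_mul_log_sub_one_le nd_pos hl1 (by exact_mod_cast hμ)
  calc lam * Real.logb 2 ((n : ℝ) * d) - binEntropy μ / Real.log 2
      = Real.logb 2 ((n : ℝ) * d) -
          (binEntropy μ + (1 - lam) * Real.log ((n : ℝ) * d)) / Real.log 2 := by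
        rw [Real.logb]
        ring
    _ ≤ _ := by gcongr

end Depolarizing

/-- lower bound for the `d`-restricted product-state capacity of the
depolarizing channel: `λ log₂(nd) − H(μ) ≤ C_prod^d(D_λ)` with `μ = λ + (1−λ)/(nd)`,
and in particular `λ log₂(nd) − 1 ≤ C_prod^d(D_λ)`. -/
theorem statement14 (n d : ℕ) (hd : 1 ≤ d) (hdn : d ≤ n) (lam : ℝ) (hl0 : 0 ≤ lam)
    (hl1 : lam ≤ 1) :
    (lam * Real.logb 2 ((n : ℝ) * d) -
        (-(lam + (1 - lam) / ((n : ℝ) * d)) * Real.logb 2 (lam + (1 - lam) / ((n : ℝ) * d)) -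
          (1 - (lam + (1 - lam) / ((n : ℝ) * d))) *
            Real.logb 2 (1 - (lam + (1 - lam) / ((n : ℝ) * d)))) ≤
      Cprod d (depol n lam)) ∧
    lam * Real.logb 2 ((n : ℝ) * d) - 1 ≤ Cprod d (depol n lam) := by
  have bound := mul_logb_sub_binEntropy_le_Cprod_depol hd hdn hl0 hl1 rfl
  rw [← binEntropy_div_log_two]
  refine ⟨bound, le_trans (sub_le_sub_left ?_ _) bound⟩
  exact (div_le_one (Real.log_pos one_lt_two)).2 Real.binEntropy_le_log_two
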